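/- Let K ≥ 2 be an integer, μ ∈ ℂ with Im μ > 0, and γ ∈ ℂ such that θ_{[00]}(γ;μ) ≠ 0 and θ_{[AB]}(0;μ) ≠ 0 for all 0 ≤ A,B ≤ K−1 with (A,B) ≠ (0,0). Then the γ-derivative of the elliptic r-matrix is symmetric under simultaneous exchange of tensor factors and sign change of the argument: ∑_{0≤A,B≤K−1,(A,B)≠(0,0)} (∂_γw_{AB})(γ;μ)·(σ_{AB} ⊗ σ^{AB}) = ∑_{0≤A,B≤K−1,(A,B)≠(0,0)} (∂_γw_{AB})(−γ;μ)·(σ^{AB} ⊗ σ_{AB}), i.e. r'^{12}(γ) = r'^{21}(−γ). -/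

import Mathlib

open Complex Filter

/-- Theta function with characteristics `p, q`. -/
noncomputable def Theta (p q : ℝ) (γ μ : ℂ) : ℂ :=
  ∑' m : ℤ, Complex.exp ((Real.pi : ℂ) * Complex.I * μ * ((m : ℂ) + (p : ℂ))^2
    + 2 * (Real.pi : ℂ) * Complex.I * ((m : ℂ) + (p : ℂ)) * (γ + (q : ℂ)))

/-- The Jacobi theta function `θ₁`. -/
noncomputable def theta1 (γ μ : ℂ) : ℂ := -Theta (1/2) (1/2) γ μ

/-- Logarithmic derivative of `θ₁` in the first argument. -/
noncomputable def rho (γ μ : ℂ) : ℂ := deriv (fun z => theta1 z μ) γ / theta1 γ μ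

/-- `θ_{[AB]}`, theta with characteristics `A/K - 1/2`, `1/2 - B/K`. -/
noncomputable def thetaAB (K : ℕ) (A B : ℤ) (γ μ : ℂ) : ℂ :=
  Theta ((A : ℝ)/(K : ℝ) - 1/2) (1/2 - (B : ℝ)/(K : ℝ)) γ μ

/-- The coefficients `w_{AB}` of the elliptic r-matrix. -/
noncomputable def wAB (K : ℕ) (A B : ℤ) (γ μ : ℂ) : ℂ :=
  thetaAB K A B γ μ * deriv (fun z => thetaAB K 0 0 z μ) 0
    / (thetaAB K A B 0 μ * thetaAB K 0 0 γ μ)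

/-- The functions `Z_{AB}`. -/
noncomputable def ZAB (K : ℕ) (A B : ℤ) (γ μ : ℂ) : ℂ :=
  wAB K A B γ μ / (2 * (Real.pi : ℂ) * Complex.I) *
    (deriv (fun z => thetaAB K A B z μ) γ / thetaAB K A B γ μ
      - deriv (fun z => thetaAB K A B z μ) 0 / thetaAB K A B 0 μ)

/-- `ε = exp(2πi/K)`. -/
noncomputable def epsK (K : ℕ) : ℂ := Complex.exp (2 * (Real.pi : ℂ) * Complex.I / (K : ℂ))

/-- The diagonal matrix `F = diag(1, ε, …, ε^{K-1})`. -/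
noncomputable def Fmat (K : ℕ) : Matrix (Fin K) (Fin K) ℂ :=
  Matrix.diagonal (fun i => epsK K ^ (i : ℕ))

/-- The cyclic permutation matrix `H`. -/
def Hmat (K : ℕ) : Matrix (Fin K) (Fin K) ℂ :=
  Matrix.of fun i j => if (j : ℕ) = ((i : ℕ) + 1) % K then 1 else 0

/-- `σ_{AB} = H^A F^B` (indices taken mod `K`, using `H^K = F^K = 1`). -/
noncomputable def sigmaAB (K : ℕ) (A B : ℤ) : Matrix (Fin K) (Fin K) ℂ :=
  Hmat K ^ ((A % (K : ℤ)).toNat) * Fmat K ^ ((B % (K : ℤ)).toNat)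

/-- The dual basis `σ^{AB} = (ε^{-AB}/K)·σ_{-A,-B}`. -/
noncomputable def sigmaDualAB (K : ℕ) (A B : ℤ) : Matrix (Fin K) (Fin K) ℂ :=
  (epsK K ^ (-(A * B)) / (K : ℂ)) • sigmaAB K (-A) (-B)

open Kronecker in
/-- The elliptic r-matrix. -/
noncomputable def rmat (K : ℕ) (γ μ : ℂ) : Matrix (Fin K × Fin K) (Fin K × Fin K) ℂ :=
  ∑ A ∈ Finset.range K, ∑ B ∈ Finset.range K,
    if A = 0 ∧ B = 0 then 0
    else wAB K A B γ μ • (sigmaAB K A B ⊗ₖ sigmaDualAB K A B)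

/-!
The substitution `m ↦ -m` in the theta series, followed by integer shifts of the characteristics,
gives `θ_{[AB]}(-γ) = -ε ^ A θ_{[-A,-B]}(γ)`. The constant cancels in `w_{AB}`, and the oddness of
`θ_{[00]}` leaves `w_{AB}(-γ) = -w_{-A,-B}(γ)`, so `w'_{AB}(-γ) = w'_{-A,-B}(γ)`. On the matrix side
`σ^{-A,-B} ⊗ σ_{-A,-B} = σ_{AB} ⊗ σ^{AB}`. Hence each term of `r'^{21}(-γ)` is the term of
`r'^{12}(γ)` with index `(-A, -B)`, and the two sums agree because these terms only depend on `A`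
and `B` modulo `K`.
-/

section PeriodicSum

variable {M : Type*} [AddCommMonoid M]

theorem sum_range_neg_of_periodic {K : ℕ} {f : ℤ → M} (hf : Function.Periodic f K) :
    ∑ i ∈ Finset.range K, f (-i) = ∑ i ∈ Finset.range K, f i := by
  cases K with
  | zero => rfl
  | succ n =>
    rw [Finset.sum_range_succ', Finset.sum_range_succ' (fun i : ℕ => f i),
      ← Finset.sum_range_reflect (fun i : ℕ => f (i + 1 : ℕ))]
    congr 1
    refine Finset.sum_congr rfl fun i hi => ?_
    have hin : i < n := Finset.mem_range.mp hi
    rw [← hf]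
    congr 1
    omega

theorem sum_range_sum_range_neg_of_periodic {K : ℕ} {f : ℤ → ℤ → M}
    (hf₁ : ∀ B, Function.Periodic (f · B) K) (hf₂ : ∀ A, Function.Periodic (f A) K) :
    ∑ A ∈ Finset.range K, ∑ B ∈ Finset.range K, f (-A) (-B)
      = ∑ A ∈ Finset.range K, ∑ B ∈ Finset.range K, f A B := by
  simp only [sum_range_neg_of_periodic (hf₂ _)]
  exact sum_range_neg_of_periodic (f := fun A => ∑ B ∈ Finset.range K, f A B)
    fun A => Finset.sum_congr rfl fun B _ => hf₁ B A

theorem sum_range_sum_range_ne_zero_neg_of_periodic {K : ℕ} {f : ℤ → ℤ → M}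
    (hf₁ : ∀ B, Function.Periodic (f · B) K) (hf₂ : ∀ A, Function.Periodic (f A) K) :
    (∑ A ∈ Finset.range K, ∑ B ∈ Finset.range K, if A = 0 ∧ B = 0 then 0 else f (-A) (-B))
      = ∑ A ∈ Finset.range K, ∑ B ∈ Finset.range K, if A = 0 ∧ B = 0 then 0 else f A B := by
  have eq_zero_iff_dvd {i : ℕ} (hi : i ∈ Finset.range K) : i = 0 ↔ (K : ℤ) ∣ i :=
    ⟨fun h => by simp [h], fun h =>
      Nat.eq_zero_of_dvd_of_lt (Int.natCast_dvd_natCast.mp h) (Finset.mem_range.mp hi)⟩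
  -- Excluding the class `(0, 0)` modulo `K`, rather than the index `(0, 0)`, keeps the summand
  -- periodic.
  have sum_eq (g : ℕ → ℕ → M) :
      (∑ A ∈ Finset.range K, ∑ B ∈ Finset.range K, if A = 0 ∧ B = 0 then 0 else g A B)
        = ∑ A ∈ Finset.range K, ∑ B ∈ Finset.range K,
            if (K : ℤ) ∣ A ∧ (K : ℤ) ∣ B then 0 else g A B :=
    Finset.sum_congr rfl fun A hA => Finset.sum_congr rfl fun B hB => by
      simp only [eq_zero_iff_dvd hA, eq_zero_iff_dvd hB]
  have sum_neg := sum_range_sum_range_neg_of_periodic (K := K)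
    (f := fun A B => if (K : ℤ) ∣ A ∧ (K : ℤ) ∣ B then 0 else f A B)
    (fun B A => by simp only [dvd_add_self_right, hf₁ B A])
    (fun A B => by simp only [dvd_add_self_right, hf₂ A B])
  simp only [dvd_neg] at sum_neg
  rw [sum_eq, sum_eq, sum_neg]

end PeriodicSum

section Theta

theorem Theta_neg (p q : ℝ) (γ μ : ℂ) : Theta p q (-γ) μ = Theta (-p) (-q) γ μ := by
  unfold Theta
  rw [← (Equiv.neg ℤ).tsum_eq]
  refine tsum_congr fun m => ?_
  simp only [Equiv.neg_apply]
  push_cast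
  ring_nf

theorem Theta_add_intCast_left (p q : ℝ) (n : ℤ) (γ μ : ℂ) :
    Theta (p + n) q γ μ = Theta p q γ μ := by
  unfold Theta
  symm
  rw [← (Equiv.addRight n).tsum_eq]
  refine tsum_congr fun m => ?_
  simp only [Equiv.coe_addRight]
  push_cast
  ring_nf

theorem Theta_add_intCast_right (p q : ℝ) (k : ℤ) (γ μ : ℂ) :
    Theta p (q + k) γ μ = Complex.exp (2 * Real.pi * Complex.I * p * k) * Theta p q γ μ := by
  unfold Theta
  rw [← tsum_mul_left]
  refine tsum_congr fun m => ?_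
  rw [← Complex.exp_add, Complex.exp_eq_exp_iff_exists_int]
  refine ⟨m * k, ?_⟩
  push_cast
  ring

end Theta

section RootOfUnity

variable (K : ℕ)

theorem epsK_zpow (n : ℤ) : epsK K ^ n = Complex.exp (2 * Real.pi * Complex.I * n / K) := by
  rw [epsK, ← Complex.exp_int_mul]
  ring_nf

theorem epsK_ne_zero : epsK K ≠ 0 := Complex.exp_ne_zero _

theorem epsK_pow_self : epsK K ^ K = 1 := by
  rcases eq_or_ne K 0 with rfl | hK
  · exact pow_zero _
  · exact (Complex.isPrimitiveRoot_exp K hK).pow_eq_one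

theorem epsK_zpow_periodic : Function.Periodic (epsK K ^ · : ℤ → ℂ) K := fun n => by
  simp only [zpow_add₀ (epsK_ne_zero K), zpow_natCast, epsK_pow_self, mul_one]

end RootOfUnity

section ThetaAB

variable (K : ℕ) (A B : ℤ) (γ μ : ℂ)

theorem thetaAB_neg :
    thetaAB K A B (-γ) μ = -epsK K ^ A * thetaAB K (-A) (-B) γ μ := by
  have hp : -((A : ℝ) / K - 1 / 2) = ((-A : ℤ) / K - 1 / 2) + (1 : ℤ) := by push_cast; ring
  have hq : -(1 / 2 - (B : ℝ) / K) = (1 / 2 - (-B : ℤ) / K) + (-1 : ℤ) := by push_cast; ring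
  have hc : Complex.exp (2 * Real.pi * Complex.I * ((-A : ℤ) / K - 1 / 2 : ℝ) * (-1 : ℤ))
      = -epsK K ^ A := by
    rw [epsK_zpow, ← Complex.exp_add_pi_mul_I]
    push_cast
    ring_nf
  unfold thetaAB
  rw [Theta_neg, hp, hq, Theta_add_intCast_left, Theta_add_intCast_right, hc]

theorem thetaAB_zero_zero_neg : thetaAB K 0 0 (-γ) μ = -thetaAB K 0 0 γ μ := by
  simpa using thetaAB_neg K 0 0 γ μ

variable [NeZero K]

theorem thetaAB_periodic_left : Function.Periodic (thetaAB K · B γ μ) K := fun A => by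
  have hp : ((A + K : ℤ) : ℝ) / K - 1 / 2 = (A / K - 1 / 2) + (1 : ℤ) := by
    push_cast
    rw [add_div, div_self (NeZero.ne (K : ℝ))]
    ring
  simp only [thetaAB]
  rw [hp, Theta_add_intCast_left]

theorem thetaAB_add_self_right :
    thetaAB K A (B + K) γ μ = -epsK K ^ (-A) * thetaAB K A B γ μ := by
  have hq : 1 / 2 - ((B + K : ℤ) : ℝ) / K = (1 / 2 - B / K) + (-1 : ℤ) := by
    push_cast
    rw [add_div, div_self (NeZero.ne (K : ℝ))]
    ring
  have hc : Complex.exp (2 * Real.pi * Complex.I * (A / K - 1 / 2 : ℝ) * (-1 : ℤ))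
      = -epsK K ^ (-A) := by
    rw [epsK_zpow, ← Complex.exp_add_pi_mul_I]
    push_cast
    ring_nf
  unfold thetaAB
  rw [hq, Theta_add_intCast_right, hc]

end ThetaAB

section WAB

variable (K : ℕ) (A B : ℤ) (γ μ : ℂ)

theorem wAB_neg : wAB K A B (-γ) μ = -wAB K (-A) (-B) γ μ := by
  have hε : -epsK K ^ A ≠ 0 := neg_ne_zero.mpr (zpow_ne_zero _ (epsK_ne_zero K))
  have h0 : thetaAB K A B 0 μ = -epsK K ^ A * thetaAB K (-A) (-B) 0 μ := by
    simpa only [neg_zero] using thetaAB_neg K A B 0 μ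
  unfold wAB
  rw [thetaAB_neg, h0, thetaAB_zero_zero_neg, mul_assoc, mul_assoc, mul_div_mul_left _ _ hε,
    mul_neg, div_neg]

theorem deriv_wAB_neg :
    deriv (fun z => wAB K A B z μ) (-γ) = deriv (fun z => wAB K (-A) (-B) z μ) γ := by
  have h : (fun z => wAB K (-A) (-B) z μ) = fun z => -wAB K A B (-z) μ := by
    funext z
    rw [wAB_neg, neg_neg]
  rw [h, deriv.fun_neg, deriv_comp_neg (fun z => wAB K A B z μ), neg_neg]

variable [NeZero K]

theorem wAB_periodic_left : Function.Periodic (wAB K · B γ μ) K := fun A => by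
  simp only [wAB, thetaAB_periodic_left K B _ μ A]

theorem wAB_periodic_right : Function.Periodic (wAB K A · γ μ) K := fun B => by
  have hε : -epsK K ^ (-A) ≠ 0 := neg_ne_zero.mpr (zpow_ne_zero _ (epsK_ne_zero K))
  simp only [wAB, thetaAB_add_self_right]
  rw [mul_assoc, mul_assoc, mul_div_mul_left _ _ hε]

end WAB

section Sigma

variable (K : ℕ) (A B : ℤ)

theorem sigmaAB_periodic_left : Function.Periodic (sigmaAB K · B) K := fun A => by
  simp only [sigmaAB, Int.add_emod_right]

theorem sigmaAB_periodic_right : Function.Periodic (sigmaAB K A) K := fun B => by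
  simp only [sigmaAB, Int.add_emod_right]

theorem sigmaDualAB_periodic_left : Function.Periodic (sigmaDualAB K · B) K := fun A => by
  have hε : epsK K ^ (-((A + K) * B)) = epsK K ^ (-(A * B)) := by
    rw [add_mul, mul_comm (K : ℤ), neg_add']
    exact ((epsK_zpow_periodic K).int_mul B).sub_eq _
  have hσ : sigmaAB K (-(A + K)) (-B) = sigmaAB K (-A) (-B) := by
    rw [neg_add']
    exact (sigmaAB_periodic_left K (-B)).sub_eq (-A)
  simp only [sigmaDualAB, hε, hσ]

theorem sigmaDualAB_periodic_right : Function.Periodic (sigmaDualAB K A) K := fun B => by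
  have hε : epsK K ^ (-(A * (B + K))) = epsK K ^ (-(A * B)) := by
    rw [mul_add, neg_add']
    exact ((epsK_zpow_periodic K).int_mul A).sub_eq _
  have hσ : sigmaAB K (-A) (-(B + K)) = sigmaAB K (-A) (-B) := by
    rw [neg_add']
    exact (sigmaAB_periodic_right K (-A)).sub_eq (-B)
  simp only [sigmaDualAB, hε, hσ]

open Kronecker in
theorem sigmaDualAB_kronecker_sigmaAB :
    sigmaDualAB K A B ⊗ₖ sigmaAB K A B = sigmaAB K (-A) (-B) ⊗ₖ sigmaDualAB K (-A) (-B) := by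
  simp only [sigmaDualAB, Matrix.smul_kronecker, Matrix.kronecker_smul, neg_mul_neg, neg_neg]

end Sigma

section RmatDerivTerm

open Kronecker

variable (K : ℕ) (A B : ℤ) (γ μ : ℂ)

/-- The summand `w'_{AB}(γ) · (σ_{AB} ⊗ σ^{AB})` of the derivative `r'^{12}(γ)` of the elliptic
r-matrix, for arbitrary integer indices. -/
noncomputable def rmatDerivTerm : Matrix (Fin K × Fin K) (Fin K × Fin K) ℂ :=
  deriv (fun z => wAB K A B z μ) γ • (sigmaAB K A B ⊗ₖ sigmaDualAB K A B)

theorem deriv_wAB_neg_smul_kronecker :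
    deriv (fun z => wAB K A B z μ) (-γ) • (sigmaDualAB K A B ⊗ₖ sigmaAB K A B)
      = rmatDerivTerm K (-A) (-B) γ μ := by
  rw [rmatDerivTerm, deriv_wAB_neg, sigmaDualAB_kronecker_sigmaAB]

variable [NeZero K]

theorem rmatDerivTerm_periodic_left : Function.Periodic (rmatDerivTerm K · B γ μ) K := fun A => by
  simp only [rmatDerivTerm, wAB_periodic_left K B _ μ A, sigmaAB_periodic_left K B A,
    sigmaDualAB_periodic_left K B A]

theorem rmatDerivTerm_periodic_right : Function.Periodic (rmatDerivTerm K A · γ μ) K := fun B => by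
  simp only [rmatDerivTerm, wAB_periodic_right K A _ μ B, sigmaAB_periodic_right K A B,
    sigmaDualAB_periodic_right K A B]

end RmatDerivTerm

open Kronecker in
/-- symmetry of the derivative of the elliptic r-matrix:
`r'^{12}(γ) = r'^{21}(−γ)`. -/
theorem rmat_deriv_symmetry (K : ℕ) (hK : 2 ≤ K) (μ γ : ℂ) (hμ : 0 < μ.im)
    (h00 : thetaAB K 0 0 γ μ ≠ 0)
    (h0 : ∀ A B : ℕ, A < K → B < K → ¬(A = 0 ∧ B = 0) → thetaAB K A B 0 μ ≠ 0) :
    (∑ A ∈ Finset.range K, ∑ B ∈ Finset.range K,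
        if A = 0 ∧ B = 0 then 0
        else (deriv (fun z => wAB K A B z μ) γ) • (sigmaAB K A B ⊗ₖ sigmaDualAB K A B))
      = ∑ A ∈ Finset.range K, ∑ B ∈ Finset.range K,
          if A = 0 ∧ B = 0 then 0
          else (deriv (fun z => wAB K A B z μ) (-γ)) • (sigmaDualAB K A B ⊗ₖ sigmaAB K A B) := by
  have : NeZero K := ⟨by omega⟩
  symm
  simp only [deriv_wAB_neg_smul_kronecker]
  exact sum_range_sum_range_ne_zero_neg_of_periodic
    (fun B => rmatDerivTerm_periodic_left K B γ μ)
    (fun A => rmatDerivTerm_periodic_right K A γ μ)
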